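/- Finite dimensionality of evaluation-type highest weight modules: Assume M, N ≥ 1. Let μ_1, …, μ_{M+N} ∈ ℂ satisfy μ_a − μ_{a+1} ∈ ℤ_{≥0} for all a with 1 ≤ a < M+N and a ≠ M. Define the weight Λ = (λ_a[n]) by λ_a[1] = μ_a and λ_a[n] = 0 for all n ≥ 2 (i.e. λ_a(x) = (−1)^{[a]} + μ_a x^{−1}). Then the irreducible highest weight Y(gl(M|N))-module V(Λ) with highest weight Λ is finite dimensional. -/

import Mathlib

/-!
Write `t^a_b[n]` also for the operators on `V`.  Giving `t^a_b[n]` degree `n`, the defining relations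
say that generators supercommute up to terms of lower degree, so monomials may be reordered at will
when computing spans (`op_mem_of_perm`).  The operator `H = -∑ a · t^a_a[1]` grades the generators, and
reordering shows the singular vector principle (`singular_eq_zero`): a vector of `H`-weight strictly
below that of `v` which is killed by all `t^a_b[n]` with `a < b` must vanish, because it generates a
submodule that misses `v`.

The principle is used twice.  By induction on `b - a` it gives `t^b_a[n] v = 0` for all `n ≥ 2`; the
vectors killed by every generator of level at least two form a submodule, so these generators act by
zero on `V` (`higher_eq_zero`) and `V` is a `gl(M|N)`-module generated by `v`.  Next, for an even
simple root with lowering operator `f` and `k = μ_a - μ_{a+1} ∈ ℕ`, the vector `f ^ (k + 1) v` is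
singular, hence zero; since `ad f` is nilpotent, `f` is locally nilpotent on `V`.

The other even lowering operators are iterated commutators of simple ones in Heisenberg position,
and these are again locally nilpotent (`locNil_commutator`); odd lowering operators square to zero.
By reordering, `V` is spanned by `f₁^{k₁} ⋯ fᵣ^{kᵣ} v`, with `f₁, …, fᵣ` the finitely many lowering
operators of level one.  As each of them is locally nilpotent, only finitely many of these vectors are
nonzero (`flag_finiteDimensional`).
-/

open scoped BigOperators TensorProduct

namespace SY

/-- The parity `[a]` of an index: `0` if `a ≤ M` (1-based), `1` otherwise.  Indices are 0-based
`Fin (M+N)`, so `[a] = 0` iff `a < M`. -/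
def pa (M : ℕ) {k : ℕ} (a : Fin k) : ℕ := if (a : ℕ) < M then 0 else 1

/-- Index type for the generators of the super Yangian: `(a, b, k)` encodes `t^a_b[k+1]`. -/
abbrev Gen (M N : ℕ) := Fin (M + N) × Fin (M + N) × ℕ

/-- The free algebra on the generators. -/
abbrev F (M N : ℕ) := FreeAlgebra ℂ (Gen M N)

/-- `T M N a b n` is the free-algebra element corresponding to `t^a_b[n]` (`n ≥ 1`). -/
noncomputable def T (M N : ℕ) (a b : Fin (M + N)) (n : ℕ) : F M N :=
  FreeAlgebra.ι ℂ ((a, b, n - 1) : Gen M N)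

noncomputable def sgn1 (M : ℕ) {k : ℕ} (a1 b1 a2 b2 : Fin k) : ℂ :=
  (-1 : ℂ) ^ ((pa M a1 + pa M b1) * (pa M a2 + pa M b2))

noncomputable def sgn2 (M : ℕ) {k : ℕ} (a1 b1 a2 : Fin k) : ℂ :=
  (-1 : ℂ) ^ (pa M a1 * pa M a2 + pa M b1 * (pa M a1 + pa M a2))

/-- The defining relations of the super Yangian `Y(gl(M|N))`. -/
inductive Rel (M N : ℕ) : F M N → F M N → Prop
  | defining (a1 b1 a2 b2 : Fin (M + N)) (m n : ℕ) (hm : 1 ≤ m) (hn : 1 ≤ n) :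
      Rel M N
        (T M N a1 b1 m * T M N a2 b2 n - sgn1 M a1 b1 a2 b2 • (T M N a2 b2 n * T M N a1 b1 m))
        ((if b1 = a2 then T M N a1 b2 (m + n - 1) else 0)
          - sgn1 M a1 b1 a2 b2 • (if b2 = a1 then T M N a2 b1 (m + n - 1) else 0)
          + sgn2 M a1 b1 a2 •
              ∑ r ∈ Finset.Ico 1 (min m n),
                (T M N a2 b1 r * T M N a1 b2 (m + n - 1 - r)
                  - T M N a2 b1 (m + n - 1 - r) * T M N a1 b2 r))

/-- The super Yangian `Y(gl(M|N))` as the quotient of the free algebra by the defining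
relations. -/
abbrev Y (M N : ℕ) := RingQuot (Rel M N)

/-- The generator `t^a_b[n]` of `Y(gl(M|N))` (for `n ≥ 1`). -/
noncomputable def t (M N : ℕ) (a b : Fin (M + N)) (n : ℕ) : Y M N :=
  RingQuot.mkAlgHom ℂ (Rel M N) (T M N a b n)

/-- The generator of `Y(gl(M|N))` indexed by `g : Gen M N`, i.e. `t^a_b[k+1]` for
`g = (a,b,k)`. -/
noncomputable def tg (M N : ℕ) (g : Gen M N) : Y M N :=
  RingQuot.mkAlgHom ℂ (Rel M N) (FreeAlgebra.ι ℂ g)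

/-- `g` indexes an odd generator iff `[a]+[b]` is odd. -/
abbrev oddG (M N : ℕ) (g : Gen M N) : Prop := (pa M g.1 + pa M g.2.1) % 2 = 1

/-- A representation of `Y(gl(M|N))` is irreducible if the space is nonzero and the only
invariant subspaces are `⊥` and `⊤`. -/
def IsIrreducibleRep (M N : ℕ) {V : Type*} [AddCommGroup V] [Module ℂ V]
    (ρ : Y M N →ₐ[ℂ] Module.End ℂ V) : Prop :=
  (∃ v : V, v ≠ 0) ∧
    ∀ W : Submodule ℂ V, (∀ y : Y M N, ∀ w ∈ W, ρ y w ∈ W) → W = ⊥ ∨ W = ⊤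

/-- `v` is a maximal vector of weight `Λ = (λ_a[n])`. -/
def IsMaximalVec (M N : ℕ) {V : Type*} [AddCommGroup V] [Module ℂ V]
    (ρ : Y M N →ₐ[ℂ] Module.End ℂ V) (v : V) (Λ : Fin (M + N) → ℕ → ℂ) : Prop :=
  v ≠ 0 ∧
    (∀ a b : Fin (M + N), a < b → ∀ n : ℕ, 1 ≤ n → ρ (t M N a b n) v = 0) ∧
    (∀ (a : Fin (M + N)) (n : ℕ), 1 ≤ n → ρ (t M N a a n) v = Λ a n • v)

/-! ### Families of operators satisfying the Yangian relations -/

section Operators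

variable {M N : ℕ} {V : Type} [AddCommGroup V] [Module ℂ V]

/-- The operators `e a b n` (standing for the action of `t^a_b[n]`, `n ≥ 1`) satisfy the defining
relations of `Y(gl(M|N))`.  The values `e a b 0` are irrelevant. -/
def IsYRep (M N : ℕ) {V : Type} [AddCommGroup V] [Module ℂ V]
    (e : Fin (M + N) → Fin (M + N) → ℕ → Module.End ℂ V) : Prop :=
  ∀ (a1 b1 a2 b2 : Fin (M + N)) (m n : ℕ), 1 ≤ m → 1 ≤ n →
    e a1 b1 m * e a2 b2 n - sgn1 M a1 b1 a2 b2 • (e a2 b2 n * e a1 b1 m) =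
      (if b1 = a2 then e a1 b2 (m + n - 1) else 0)
        - sgn1 M a1 b1 a2 b2 • (if b2 = a1 then e a2 b1 (m + n - 1) else 0)
        + sgn2 M a1 b1 a2 •
            ∑ r ∈ Finset.Ico 1 (min m n),
              (e a2 b1 r * e a1 b2 (m + n - 1 - r)
                - e a2 b1 (m + n - 1 - r) * e a1 b2 r)

/-- No proper nonzero subspace is invariant under all the operators `e a b n`, `n ≥ 1`. -/
def IsIrr (e : Fin (M + N) → Fin (M + N) → ℕ → Module.End ℂ V) : Prop :=
  ∀ W : Submodule ℂ V, (∀ a b n, 1 ≤ n → ∀ w ∈ W, e a b n w ∈ W) → W = ⊥ ∨ W = ⊤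

lemma isYRep_of_rep (ρ : Y M N →ₐ[ℂ] Module.End ℂ V) :
    IsYRep M N (fun a b n => ρ (t M N a b n)) := by
  intro a1 b1 a2 b2 m n hm hn
  have h := congrArg ρ
    (RingQuot.mkAlgHom_rel (S := ℂ) (Rel.defining a1 b1 a2 b2 m n hm hn))
  simpa only [map_sub, map_add, map_mul, map_smul, map_sum, apply_ite (RingQuot.mkAlgHom ℂ _),
    apply_ite ρ, map_zero, t] using h

lemma isIrr_of_rep (ρ : Y M N →ₐ[ℂ] Module.End ℂ V) (h : IsIrreducibleRep M N ρ) :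
    IsIrr (fun a b n => ρ (t M N a b n)) := by
  intro W hW
  refine h.2 W fun y => ?_
  obtain ⟨x, rfl⟩ := RingQuot.mkAlgHom_surjective ℂ (Rel M N) y
  induction x using FreeAlgebra.induction with
  | grade0 r =>
    intro w hw
    simpa [Module.algebraMap_end_apply] using W.smul_mem r hw
  | grade1 g =>
    intro w hw
    exact hW g.1 g.2.1 (g.2.2 + 1) (by omega) w hw
  | mul x y hx hy =>
    intro w hw
    simpa using hx _ (hy _ hw)
  | add x y hx hy =>
    intro w hw
    simpa using W.add_mem (hx _ hw) (hy _ hw)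

/-! ### Reordering monomials -/

/-- The monomial `t_{g₁} ⋯ t_{gₖ}` acting on `V`, for a word `g₁, …, gₖ` in the generators. -/
def op (e : Fin (M + N) → Fin (M + N) → ℕ → Module.End ℂ V) (l : List (Gen M N)) :
    Module.End ℂ V :=
  (l.map fun g => e g.1 g.2.1 (g.2.2 + 1)).prod

/-- The filtration degree of a word, in which `t^a_b[n]` has degree `n`. -/
def deg (l : List (Gen M N)) : ℕ := (l.map fun g => g.2.2 + 1).sum

/-- The span of the monomials of degree less than `d`. -/
def low (e : Fin (M + N) → Fin (M + N) → ℕ → Module.End ℂ V) (d : ℕ) :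
    Submodule ℂ (Module.End ℂ V) :=
  Submodule.span ℂ {x | ∃ l, deg l < d ∧ op e l = x}

variable {e : Fin (M + N) → Fin (M + N) → ℕ → Module.End ℂ V}

@[simp] lemma op_nil : op e [] = 1 := rfl

@[simp] lemma op_cons (g : Gen M N) (l) :
    op e (g :: l) = e g.1 g.2.1 (g.2.2 + 1) * op e l := by simp [op]

@[simp] lemma op_append (l l' : List (Gen M N)) : op e (l ++ l') = op e l * op e l' := by
  simp [op]

@[simp] lemma deg_cons (g : Gen M N) (l) : deg (g :: l) = g.2.2 + 1 + deg l := by simp [deg]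

@[simp] lemma deg_append (l l' : List (Gen M N)) : deg (l ++ l') = deg l + deg l' := by
  simp [deg]

@[simp] lemma deg_nil : deg ([] : List (Gen M N)) = 0 := rfl

lemma deg_perm {l l' : List (Gen M N)} (h : l.Perm l') : deg l = deg l' :=
  (h.map _).sum_eq

lemma op_mem_low {d : ℕ} {l : List (Gen M N)} (h : deg l < d) : op e l ∈ low e d :=
  Submodule.subset_span ⟨l, h, rfl⟩

lemma mul_op_mem_low {d : ℕ} {x : Module.End ℂ V} (hx : x ∈ low e d) (l : List (Gen M N)) :
    x * op e l ∈ low e (d + deg l) := by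
  induction hx using Submodule.span_induction with
  | mem x hx =>
    obtain ⟨l', hl', rfl⟩ := hx
    rw [← op_append]
    exact op_mem_low (by simp; omega)
  | zero => simp
  | add x y _ _ hx hy => rw [add_mul]; exact add_mem hx hy
  | smul c x _ hx => rw [smul_mul_assoc]; exact Submodule.smul_mem _ _ hx

lemma op_mul_mem_low {d : ℕ} {x : Module.End ℂ V} (hx : x ∈ low e d) (l : List (Gen M N)) :
    op e l * x ∈ low e (deg l + d) := by
  induction hx using Submodule.span_induction with
  | mem x hx =>
    obtain ⟨l', hl', rfl⟩ := hx
    rw [← op_append]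
    exact op_mem_low (by simp; omega)
  | zero => simp
  | add x y _ _ hx hy => rw [mul_add]; exact add_mem hx hy
  | smul c x _ hx => rw [mul_smul_comm]; exact Submodule.smul_mem _ _ hx

lemma gen_mem_low {d : ℕ} (a b : Fin (M + N)) {n : ℕ} (hn : 1 ≤ n) (hd : n < d) :
    e a b n ∈ low e d := by
  have := op_mem_low (e := e) (l := [(a, b, n - 1)]) (d := d) (by simp; omega)
  simpa [Nat.sub_add_cancel hn] using this

lemma gen_mul_gen_mem_low {d : ℕ} (a b a' b' : Fin (M + N)) {n n' : ℕ} (hn : 1 ≤ n)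
    (hn' : 1 ≤ n') (hd : n + n' < d) : e a b n * e a' b' n' ∈ low e d := by
  have := op_mem_low (e := e) (l := [(a, b, n - 1), (a', b', n' - 1)]) (d := d) (by simp; omega)
  simpa [Nat.sub_add_cancel hn, Nat.sub_add_cancel hn'] using this

/-- Every term on the right of the defining relation has degree `m + n - 1`, so generators
supercommute modulo monomials of lower degree. -/
lemma comm_mem_low (he : IsYRep M N e) (a1 b1 a2 b2 : Fin (M + N)) {m n : ℕ}
    (hm : 1 ≤ m) (hn : 1 ≤ n) :
    e a1 b1 m * e a2 b2 n - sgn1 M a1 b1 a2 b2 • (e a2 b2 n * e a1 b1 m) ∈ low e (m + n) := by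
  rw [he a1 b1 a2 b2 m n hm hn]
  refine add_mem (sub_mem ?_ (Submodule.smul_mem _ _ ?_)) (Submodule.smul_mem _ _ ?_)
  · split_ifs
    · exact gen_mem_low _ _ (by omega) (by omega)
    · exact zero_mem _
  · split_ifs
    · exact gen_mem_low _ _ (by omega) (by omega)
    · exact zero_mem _
  · refine sum_mem fun r hr => ?_
    simp only [Finset.mem_Ico, lt_min_iff] at hr
    exact sub_mem (gen_mul_gen_mem_low _ _ _ _ (by omega) (by omega) (by omega))
      (gen_mul_gen_mem_low _ _ _ _ (by omega) (by omega) (by omega))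

/-- Permuting the letters of a monomial changes it by a scalar and terms of lower degree. -/
lemma op_perm (he : IsYRep M N e) {l l' : List (Gen M N)} (h : l.Perm l') :
    ∃ s : ℂ, op e l - s • op e l' ∈ low e (deg l) := by
  induction h with
  | nil => exact ⟨1, by simp⟩
  | cons g _ ih =>
    obtain ⟨s, hs⟩ := ih
    refine ⟨s, ?_⟩
    have := op_mul_mem_low hs [g]
    simpa [mul_sub] using this
  | swap g h l =>
    refine ⟨sgn1 M h.1 h.2.1 g.1 g.2.1, ?_⟩
    have := mul_op_mem_low (comm_mem_low he h.1 h.2.1 g.1 g.2.1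
      (m := h.2.2 + 1) (n := g.2.2 + 1) (by omega) (by omega)) l
    simpa [sub_mul, mul_assoc, add_assoc] using this
  | trans h1 _ ih1 ih2 =>
    obtain ⟨s, hs⟩ := ih1
    obtain ⟨s', hs'⟩ := ih2
    rw [← deg_perm h1] at hs'
    refine ⟨s * s', ?_⟩
    convert add_mem hs (Submodule.smul_mem _ s hs') using 1
    rw [smul_sub, smul_smul]
    abel

/-- The spanning half of the Poincaré–Birkhoff–Witt theorem, in the form used here: a subspace that
contains `x u` for one rearrangement `x` of each monomial contains `x u` for all monomials `x`. -/
lemma op_mem_of_perm (he : IsYRep M N e) (u : V) (S : Submodule ℂ V)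
    (h : ∀ l : List (Gen M N), ∃ l', l.Perm l' ∧ op e l' u ∈ S) (l : List (Gen M N)) :
    op e l u ∈ S := by
  induction hd : deg l using Nat.strong_induction_on generalizing l with
  | _ d ih =>
    obtain ⟨l', hp, hl'⟩ := h l
    obtain ⟨s, hs⟩ := op_perm he hp
    have key : ∀ x ∈ low e (deg l), x u ∈ S := by
      intro x hx
      induction hx using Submodule.span_induction with
      | mem x hx =>
        obtain ⟨l', hl', rfl⟩ := hx
        exact ih _ (hd ▸ hl') l' rfl
      | zero => simp
      | add x y _ _ hx hy => exact S.add_mem hx hy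
      | smul c x _ hx => exact S.smul_mem c hx
    have h1 := S.add_mem (key _ hs) (S.smul_mem s hl')
    simpa using h1

/-- The span of all `x u`, with `x` a monomial, is the submodule generated by `u`; hence in an
irreducible module a subspace `S` containing it is everything unless `u = 0`. -/
lemma eq_zero_or_eq_top_of_op_mem (hirr : IsIrr e) (u : V) (S : Submodule ℂ V)
    (h : ∀ l : List (Gen M N), op e l u ∈ S) : u = 0 ∨ S = ⊤ := by
  let U : Submodule ℂ V := Submodule.span ℂ (Set.range fun l : List (Gen M N) => op e l u)
  have hU : U ≤ S := by
    rw [Submodule.span_le]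
    rintro _ ⟨l, rfl⟩
    exact h l
  have hu : u ∈ U := Submodule.subset_span ⟨[], by simp⟩
  have hinv : ∀ a b n, 1 ≤ n → ∀ w ∈ U, e a b n w ∈ U := by
    intro a b n hn w hw
    induction hw using Submodule.span_induction with
    | mem x hx =>
      obtain ⟨l, rfl⟩ := hx
      refine Submodule.subset_span ⟨(a, b, n - 1) :: l, ?_⟩
      simp [Nat.sub_add_cancel hn]
    | zero => simp
    | add x y _ _ hx hy => rw [map_add]; exact add_mem hx hy
    | smul c x _ hx => rw [map_smul]; exact Submodule.smul_mem _ _ hx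
  rcases hirr U hinv with h0 | h1
  · left
    rw [h0] at hu
    simpa using hu
  · right
    exact top_le_iff.mp (h1 ▸ hU)

/-! ### The grading operator and singular vectors -/

/-- The quadratic part of the relations is an empty sum when `m = 1`. -/
lemma level_one (he : IsYRep M N e) (a1 b1 a2 b2 : Fin (M + N)) {n : ℕ} (hn : 1 ≤ n) (w : V) :
    e a1 b1 1 (e a2 b2 n w) = sgn1 M a1 b1 a2 b2 • e a2 b2 n (e a1 b1 1 w)
      + ((if b1 = a2 then e a1 b2 n w else 0)
        - sgn1 M a1 b1 a2 b2 • (if b2 = a1 then e a2 b1 n w else 0)) := by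
  have h := he a1 b1 a2 b2 1 n le_rfl hn
  rw [min_eq_left hn, Finset.Ico_self, Finset.sum_empty, smul_zero, add_zero, sub_eq_iff_eq_add,
    Nat.add_sub_cancel_left, add_comm] at h
  have := congrArg (fun x : Module.End ℂ V => x w) h
  simp only [Module.End.mul_apply, LinearMap.add_apply, LinearMap.sub_apply,
    LinearMap.smul_apply] at this
  rw [this]
  split_ifs <;> simp

lemma sgn1_diag (a c d : Fin (M + N)) : sgn1 M a a c d = 1 := by
  have : Even ((pa M a + pa M a) * (pa M c + pa M d)) := by
    exact Even.mul_right ⟨_, rfl⟩ _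
  simp [sgn1, this.neg_one_pow]

lemma sgn1_ne (a b c d : Fin (M + N)) : sgn1 M a b c d ≠ 0 := by
  simp [sgn1]

/-- The operator `H = -∑ a · t^a_a[1]`, for which `[H, t^c_d[n]] = (d - c) t^c_d[n]`: lowering
generators (`c > d`) strictly decrease its eigenvalues. -/
noncomputable def Hop (e : Fin (M + N) → Fin (M + N) → ℕ → Module.End ℂ V) : Module.End ℂ V :=
  ∑ a : Fin (M + N), (-((a : ℕ) : ℂ)) • e a a 1

lemma Hop_comm (he : IsYRep M N e) (c d : Fin (M + N)) {n : ℕ} (hn : 1 ≤ n) (w : V) :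
    Hop e (e c d n w) = e c d n (Hop e w) + (((d : ℕ) : ℂ) - ((c : ℕ) : ℂ)) • e c d n w := by
  simp only [Hop, LinearMap.sum_apply, LinearMap.smul_apply, level_one he _ _ c d hn, sgn1_diag,
    one_smul, map_sum, map_smul, smul_add, smul_sub, Finset.sum_add_distrib,
    Finset.sum_sub_distrib, smul_ite, smul_zero, Finset.sum_ite_eq, Finset.sum_ite_eq',
    Finset.mem_univ, if_true]
  module

/-- The sum of the eigenspaces of `H` for the eigenvalues `h0 - 1, h0 - 2, …`, where `h0` will be the
eigenvalue of the maximal vector. -/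
noncomputable def lowerPart (e : Fin (M + N) → Fin (M + N) → ℕ → Module.End ℂ V) (h0 : ℂ) :
    Submodule ℂ V :=
  ⨆ j : ℕ, (Hop e).eigenspace (h0 - (j + 1))

lemma mem_lowerPart {h0 : ℂ} {w : V} (j : ℕ) (hj : 1 ≤ j)
    (hw : Hop e w = (h0 - j) • w) : w ∈ lowerPart e h0 := by
  obtain ⟨i, rfl⟩ := Nat.exists_eq_add_of_le' hj
  refine Submodule.mem_iSup_of_mem i ?_
  rw [Module.End.mem_eigenspace_iff, hw]
  push_cast
  rfl

lemma gen_mem_lowerPart (he : IsYRep M N e) {h0 : ℂ} {w : V} (hw : w ∈ lowerPart e h0)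
    {c d : Fin (M + N)} (hdc : d ≤ c) {n : ℕ} (hn : 1 ≤ n) : e c d n w ∈ lowerPart e h0 := by
  induction hw using Submodule.iSup_induction' with
  | mem j x hx =>
    rw [Module.End.mem_eigenspace_iff] at hx
    obtain ⟨i, hi⟩ := Nat.exists_eq_add_of_le (Fin.le_def.mp hdc)
    refine mem_lowerPart (j + 1 + i) (by omega) ?_
    rw [Hop_comm he _ _ hn, hx, map_smul, hi]
    push_cast
    module
  | zero => simp
  | add x y _ _ hx hy => rw [map_add]; exact add_mem hx hy

lemma lowerPart_disjoint {h0 : ℂ} {v : V} (hv : Hop e v = h0 • v) (hmem : v ∈ lowerPart e h0) :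
    v = 0 := by
  have hind := (Hop e).eigenspaces_iSupIndep h0
  rw [Submodule.disjoint_def] at hind
  refine hind v (Module.End.mem_eigenspace_iff.mpr hv) ?_
  refine (iSup_le fun j => ?_ : lowerPart e h0 ≤ _) hmem
  refine le_iSup₂_of_le (h0 - (j + 1)) ?_ le_rfl
  intro h
  have : ((j : ℂ) + 1) = 0 := by linear_combination -h
  exact Nat.cast_add_one_ne_zero j this

/-- In an irreducible module, a vector of strictly lower weight killed by all raising generators
vanishes: writing monomials with the raising generators on the right shows that the submodule it
generates stays inside `lowerPart`, which does not contain the maximal vector. -/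
lemma singular_eq_zero (he : IsYRep M N e) (hirr : IsIrr e) {h0 : ℂ} {v : V} (hv0 : v ≠ 0)
    (hv : Hop e v = h0 • v) {u : V} (hu : u ∈ lowerPart e h0)
    (hup : ∀ a b, a < b → ∀ n, 1 ≤ n → e a b n u = 0) : u = 0 := by
  refine (eq_zero_or_eq_top_of_op_mem hirr u (lowerPart e h0)
    (op_mem_of_perm he u _ fun l => ?_)).resolve_right fun h => hv0 (lowerPart_disjoint hv (h ▸ Submodule.mem_top))
  refine ⟨_, (List.filter_append_perm (fun g : Gen M N => decide (g.2.1 ≤ g.1)) l).symm, ?_⟩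
  rw [op_append, Module.End.mul_apply]
  have h1 : ∀ l : List (Gen M N), (∀ g ∈ l, g.1 < g.2.1) → op e l u ∈ lowerPart e h0 := by
    intro l hl
    have : op e l u = 0 ∨ op e l u = u := by
      induction l with
      | nil => right; simp
      | cons g l ih =>
        left
        rcases ih (fun g hg => hl g (List.mem_cons_of_mem _ hg)) with h | h
        · simp [h]
        · simp [h, hup _ _ (hl g List.mem_cons_self) (g.2.2 + 1) (by omega)]
    rcases this with h | h <;> rw [h]
    · exact zero_mem _
    · exact hu
  have h2 : ∀ l : List (Gen M N), (∀ g ∈ l, g.2.1 ≤ g.1) → ∀ w ∈ lowerPart e h0,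
      op e l w ∈ lowerPart e h0 := by
    intro l hl w hw
    induction l with
    | nil => simpa
    | cons g l ih =>
      rw [op_cons, Module.End.mul_apply]
      exact gen_mem_lowerPart he (ih fun g hg => hl g (List.mem_cons_of_mem _ hg))
        (hl g List.mem_cons_self) (by omega)
  refine h2 _ (fun g hg => ?_) _ (h1 _ fun g hg => ?_)
  · simpa using (List.mem_filter.mp hg).2
  · simpa using (List.mem_filter.mp hg).2



/-! ### Vanishing of the generators of level at least two -/

lemma rel_apply (he : IsYRep M N e) (a1 b1 a2 b2 : Fin (M + N)) {m n : ℕ} (hm : 1 ≤ m)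
    (hn : 1 ≤ n) (w : V) :
    e a1 b1 m (e a2 b2 n w) - sgn1 M a1 b1 a2 b2 • e a2 b2 n (e a1 b1 m w) =
      (if b1 = a2 then e a1 b2 (m + n - 1) w else 0)
        - sgn1 M a1 b1 a2 b2 • (if b2 = a1 then e a2 b1 (m + n - 1) w else 0)
        + sgn2 M a1 b1 a2 •
            ∑ r ∈ Finset.Ico 1 (min m n),
              (e a2 b1 r (e a1 b2 (m + n - 1 - r) w)
                - e a2 b1 (m + n - 1 - r) (e a1 b2 r w)) := by
  have := congrArg (fun x : Module.End ℂ V => x w) (he a1 b1 a2 b2 m n hm hn)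
  simp only [Module.End.mul_apply, LinearMap.add_apply, LinearMap.sub_apply,
    LinearMap.smul_apply, LinearMap.sum_apply] at this
  rw [this]
  split_ifs <;> simp

/-- Inductive step on the height `b - a`: if `t^b_a[n] v = 0` for all `n ≥ 2` at smaller heights, then
`t^b_a[n] v` with `n ≥ 2` is killed by all raising generators. -/
lemma gen_comp_eq_zero (he : IsYRep M N e) {v : V}
    (hup : ∀ a b, a < b → ∀ n, 1 ≤ n → e a b n v = 0) {h : ℕ}
    (ih : ∀ a b : Fin (M + N), (b : ℕ) ≤ a + h → ∀ n, 2 ≤ n → e b a n v = 0)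
    {a b c d : Fin (M + N)} (hba : (b : ℕ) = a + (h + 1)) (hcd : c < d) {m n : ℕ} (hm : 1 ≤ m)
    (hn : 2 ≤ n) : e c d m (e b a n v) = 0 := by
  have hcd' := Fin.lt_def.mp hcd
  have hab : a ≠ b := fun h => by rw [h] at hba; omega
  have hd1 : (if d = b then e c a (m + n - 1) v else 0) = 0 := by
    split_ifs with h
    · subst h
      exact ih a c (by omega) _ (by omega)
    · rfl
  have hd2 : (if a = c then e b d (m + n - 1) v else 0) = 0 := by
    split_ifs with h
    · subst h
      exact ih d b (by omega) _ (by omega)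
    · rfl
  -- The two orders of the factors in the defining relation give different quadratic terms
  -- `t^b_d t^c_a` and `t^c_a t^b_d`; the first serves for `c < b`, the second for `c ≥ b`.
  rcases lt_or_ge (c : ℕ) b with hcb | hcb
  · have hrel := rel_apply he c d b a hm (by omega : 1 ≤ n) v
    rw [hup c d hcd m hm, map_zero, smul_zero, sub_zero, hd1, hd2, Finset.sum_eq_zero] at hrel
    · simpa using hrel
    intro r hr
    simp only [Finset.mem_Ico, lt_min_iff] at hr
    rw [ih a c (by omega) _ (by omega), map_zero, zero_sub, neg_eq_zero]
    rcases Nat.lt_or_ge 1 r with hr1 | hr1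
    · rw [ih a c (by omega) _ (by omega), map_zero]
    obtain rfl : r = 1 := by omega
    -- What remains is `t^b_d[m + n - 2] t^c_a[1] v`; its factors supercommute if `a < d`.
    rcases lt_or_ge (a : ℕ) d with had | had
    · have h1 := level_one he c a b d (n := m + n - 1 - 1) (by omega) v
      rw [if_neg hab, if_neg (ne_of_gt hcd), ih d b (by omega) _ (by omega)] at h1
      simp only [map_zero, smul_zero, sub_zero, add_zero] at h1
      exact (smul_eq_zero.mp h1.symm).resolve_left (sgn1_ne _ _ _ _)
    · rw [hup c a (Fin.lt_def.mpr (by omega)) 1 le_rfl, map_zero]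
  · have hrel := rel_apply he b a c d (by omega : 1 ≤ n) hm v
    have hbd : b < d := Fin.lt_def.mpr (by omega)
    rw [hup c d hcd m hm, map_zero, zero_sub, Nat.add_comm n m, hd1, hd2,
      Finset.sum_eq_zero] at hrel
    · simp only [smul_zero, sub_zero, add_zero, neg_eq_zero] at hrel
      exact (smul_eq_zero.mp hrel).resolve_left (sgn1_ne _ _ _ _)
    intro r hr
    simp only [Finset.mem_Ico, lt_min_iff] at hr
    rw [hup b d hbd _ (by omega), hup b d hbd _ (by omega), map_zero, map_zero, sub_zero]

lemma Hop_maximal {v : V} {μ : Fin (M + N) → ℂ} (hdiag : ∀ a, e a a 1 v = μ a • v) :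
    Hop e v = (∑ a : Fin (M + N), -((a : ℕ) : ℂ) * μ a) • v := by
  simp only [Hop, LinearMap.sum_apply, LinearMap.smul_apply, hdiag, smul_smul, Finset.sum_smul]

lemma higher_apply_eq_zero (he : IsYRep M N e) (hirr : IsIrr e) {v : V} (hv0 : v ≠ 0)
    {μ : Fin (M + N) → ℂ}
    (hup : ∀ a b, a < b → ∀ n, 1 ≤ n → e a b n v = 0)
    (hdiag : ∀ a, e a a 1 v = μ a • v) (hdiag2 : ∀ a n, 2 ≤ n → e a a n v = 0) (h : ℕ) :
    ∀ a b : Fin (M + N), (b : ℕ) ≤ a + h → ∀ n, 2 ≤ n → e b a n v = 0 := by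
  induction h with
  | zero =>
    intro a b hba n hn
    rcases (Fin.le_def.mpr hba : b ≤ a).eq_or_lt with rfl | hlt
    · exact hdiag2 _ n hn
    · exact hup b a hlt n (by omega)
  | succ h ih =>
    intro a b hba n hn
    rcases Nat.lt_or_ge (b : ℕ) (a + (h + 1)) with hlt | hge
    · exact ih a b (by omega) n hn
    have hba : (b : ℕ) = a + (h + 1) := by omega
    have hH := Hop_maximal hdiag
    refine singular_eq_zero he hirr hv0 hH (mem_lowerPart (h + 1) (by omega) ?_) ?_
    · rw [Hop_comm he _ _ (by omega), hH, map_smul, hba]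
      push_cast
      module
    · intro c d hcd m hm
      exact gen_comp_eq_zero he hup ih hba hcd hm hn

/-- The common kernel of the generators of level at least two is a submodule, so it is all of `V` as
soon as it contains a nonzero vector. -/
lemma higher_eq_zero (he : IsYRep M N e) (hirr : IsIrr e) {v : V} (hv0 : v ≠ 0)
    (hv : ∀ a b n, 2 ≤ n → e a b n v = 0) (a b : Fin (M + N)) {n : ℕ} (hn : 2 ≤ n) :
    e a b n = 0 := by
  let W : Submodule ℂ V :=
    { carrier := {w | ∀ a b n, 2 ≤ n → e a b n w = 0}
      add_mem' := fun hx hy a b n hn => by rw [map_add, hx a b n hn, hy a b n hn, add_zero]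
      zero_mem' := fun a b n _ => map_zero _
      smul_mem' := fun c x hx a b n hn => by rw [map_smul, hx a b n hn, smul_zero] }
  have hvW : v ∈ W := hv
  have hinv : ∀ a b n, 1 ≤ n → ∀ w ∈ W, e a b n w ∈ W := by
    intro c d m hm w hw a b n hn
    rcases Nat.lt_or_ge 1 m with h | h
    · rw [hw c d m h, map_zero]
    obtain rfl : m = 1 := by omega
    have h1 := level_one he c d a b (n := n) (by omega) w
    rw [hw a b n hn, hw c b n hn, hw a d n hn] at h1
    simp only [map_zero, smul_zero, ite_self, sub_zero, add_zero] at h1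
    exact (smul_eq_zero.mp h1.symm).resolve_left (sgn1_ne _ _ _ _)
  rcases hirr W hinv with h | h
  · rw [h] at hvW
    exact absurd (by simpa using hvW) hv0
  · ext w
    have hw : w ∈ W := h ▸ Submodule.mem_top
    exact hw a b n hn

/-! ### Locally nilpotent operators -/

/-- `f` is locally nilpotent: every vector is killed by some power of `f`. -/
def LocNil (f : Module.End ℂ V) : Prop := ∀ w : V, ∃ j : ℕ, (f ^ j) w = 0

lemma pow_apply_eq_zero {f : Module.End ℂ V} {w : V} {i j : ℕ} (hij : i ≤ j)
    (h : (f ^ i) w = 0) : (f ^ j) w = 0 := by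
  obtain ⟨k, rfl⟩ := Nat.exists_eq_add_of_le' hij
  rw [pow_add, Module.End.mul_apply, h, map_zero]

/-- If `ad f` to the power `k` kills `X` and `f ^ j` kills `w`, then `f ^ (k + j)` kills `X w`. -/
lemma pow_mul_apply_eq_zero {f : Module.End ℂ V} (k j : ℕ) :
    ∀ (X : Module.End ℂ V) (w : V), ((fun Z => f * Z - Z * f)^[k] X) = 0 → (f ^ j) w = 0 →
      (f ^ (k + j)) (X w) = 0 := by
  induction k generalizing j with
  | zero => intro X w hX _; simp_all
  | succ k ihk =>
    induction j with
    | zero => intro X w _ hw; simp_all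
    | succ j ihj =>
      intro X w hX hw
      have h1 : f (X w) = X (f w) + (f * X - X * f) w := by simp
      rw [← add_assoc, pow_succ, Module.End.mul_apply, h1, map_add]
      have h2 := ihj X (f w) hX (by rwa [pow_succ, Module.End.mul_apply] at hw)
      have h3 := ihk (j + 1) (f * X - X * f) w (by simpa using hX) hw
      rw [h2, zero_add, ← h3]
      congr 2
      omega

/-- When every generator is killed by a power of `ad f`, the vectors killed by a power of `f` form a
submodule; so nilpotency of `f` on one nonzero vector gives local nilpotency on `V`. -/
lemma locNil_of_apply (hirr : IsIrr e) {v : V} (hv0 : v ≠ 0) {f : Module.End ℂ V}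
    (had : ∀ a b n, 1 ≤ n → ∃ k, ((fun Z => f * Z - Z * f)^[k] (e a b n)) = 0)
    (hv : ∃ j : ℕ, (f ^ j) v = 0) : LocNil f := by
  let W : Submodule ℂ V :=
    { carrier := {w | ∃ j : ℕ, (f ^ j) w = 0}
      add_mem' := by
        rintro x y ⟨i, hx⟩ ⟨j, hy⟩
        refine ⟨i + j, ?_⟩
        rw [map_add, pow_apply_eq_zero (by omega) hx, pow_apply_eq_zero (by omega) hy, add_zero]
      zero_mem' := ⟨0, map_zero _⟩
      smul_mem' := by
        rintro c x ⟨i, hx⟩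
        exact ⟨i, by rw [map_smul, hx, smul_zero]⟩ }
  have hvW : v ∈ W := hv
  have hinv : ∀ a b n, 1 ≤ n → ∀ w ∈ W, e a b n w ∈ W := by
    rintro a b n hn w ⟨j, hj⟩
    obtain ⟨k, hk⟩ := had a b n hn
    exact ⟨k + j, pow_mul_apply_eq_zero k j _ _ hk hj⟩
  rcases hirr W hinv with h | h
  · rw [h] at hvW
    exact absurd (by simpa using hvW) hv0
  · intro w
    have hw : w ∈ W := h ▸ Submodule.mem_top
    exact hw

/-- If `x`, `y` are locally nilpotent and `z = [x, y]` commutes with both, then `z` is locally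
nilpotent: on the kernel of `x` one has `x ^ j * y ^ j = j! • z ^ j`, and the kernels of the powers
of `x` follow by induction. -/
lemma locNil_commutator {x y z : Module.End ℂ V} (hxy : x * y = y * x + z)
    (hxz : x * z = z * x) (hyz : y * z = z * y) (hx : LocNil x) (hy : LocNil y) : LocNil z := by
  have hyzp : ∀ j, Commute z (y ^ j) := fun j =>
    Commute.pow_right (show Commute z y from hyz.symm) j
  have h1 : ∀ (j : ℕ) (w : V), x w = 0 → x ((y ^ (j + 1)) w) = ((j : ℂ) + 1) • z ((y ^ j) w) := by
    intro j w hw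
    induction j with
    | zero =>
      have := congrArg (fun f : Module.End ℂ V => f w) hxy
      simpa [hw] using this
    | succ j ih =>
      rw [pow_succ', Module.End.mul_apply, ← Module.End.mul_apply x y, hxy, LinearMap.add_apply,
        Module.End.mul_apply, ih, map_smul, ← Module.End.mul_apply y z, hyz,
        Module.End.mul_apply, ← Module.End.mul_apply y (y ^ j), ← pow_succ']
      push_cast
      module
  have h2 : ∀ (j : ℕ) (w : V), x w = 0 → (y ^ j) w = 0 → (z ^ j) w = 0 := by
    intro j
    induction j with
    | zero => simp
    | succ j ih =>
      intro w hxw hyw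
      have h3 := h1 j w hxw
      rw [hyw, map_zero, eq_comm, smul_eq_zero] at h3
      have h4 := h3.resolve_left (Nat.cast_add_one_ne_zero j)
      rw [← Module.End.mul_apply, (hyzp j).eq, Module.End.mul_apply] at h4
      rw [pow_succ, Module.End.mul_apply]
      refine ih _ ?_ h4
      rw [← Module.End.mul_apply, hxz, Module.End.mul_apply, hxw, map_zero]
  have h3 : ∀ (m : ℕ) (w : V), (x ^ m) w = 0 → ∃ j, (z ^ j) w = 0 := by
    intro m
    induction m with
    | zero => intro w hw; exact ⟨0, hw⟩
    | succ m ih =>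
      intro w hw
      obtain ⟨i, hi⟩ := ih (x w) (by rwa [pow_succ, Module.End.mul_apply] at hw)
      have hxi : x ((z ^ i) w) = 0 := by
        rw [← Module.End.mul_apply, (Commute.pow_right (show Commute x z from hxz) i).eq,
          Module.End.mul_apply, hi]
      obtain ⟨j, hj⟩ := hy ((z ^ i) w)
      exact ⟨j + i, by rw [pow_add, Module.End.mul_apply, h2 j _ hxi hj]⟩
  intro w
  obtain ⟨m, hm⟩ := hx w
  exact h3 m w hm

lemma finiteDimensional_iSup_map_pow {f : Module.End ℂ V} (hf : LocNil f) (S : Submodule ℂ V)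
    [FiniteDimensional ℂ S] : FiniteDimensional ℂ ↥(⨆ k : ℕ, S.map (f ^ k)) := by
  obtain ⟨s, hs⟩ := (Submodule.fg_iff_finiteDimensional S).mpr inferInstance
  choose j hj using hf
  have hK : ∀ k, s.sup j ≤ k → S.map (f ^ k) = ⊥ := by
    intro k hk
    rw [← hs, Submodule.map_span, Submodule.span_eq_bot]
    rintro _ ⟨w, hw, rfl⟩
    exact pow_apply_eq_zero ((Finset.le_sup (f := j) hw).trans hk) (hj w)
  have : (⨆ k : ℕ, S.map (f ^ k)) ≤ ⨆ k : Fin (s.sup j), S.map (f ^ (k : ℕ)) := by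
    refine iSup_le fun k => ?_
    rcases Nat.lt_or_ge k (s.sup j) with h | h
    · exact le_iSup (fun k : Fin (s.sup j) => S.map (f ^ (k : ℕ))) ⟨k, h⟩
    · rw [hK k h]; exact bot_le
  exact Submodule.finiteDimensional_of_le this

/-! ### Local nilpotency of the lowering operators -/

lemma ad_even (he : IsYRep M N e) {a b : Fin (M + N)} (hpa : pa M a = pa M b)
    (c d : Fin (M + N)) {n : ℕ} (hn : 1 ≤ n) :
    e b a 1 * e c d n - e c d n * e b a 1 =
      (if a = c then e b d n else 0) - (if d = b then e c a n else 0) := by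
  have hs : sgn1 M b a c d = 1 := by
    have : Even ((pa M b + pa M a) * (pa M c + pa M d)) := by
      rw [hpa]; exact Even.mul_right ⟨_, rfl⟩ _
    simp [sgn1, this.neg_one_pow]
  ext w
  have h := level_one he b a c d hn w
  rw [hs, one_smul, one_smul] at h
  rw [LinearMap.sub_apply, Module.End.mul_apply, Module.End.mul_apply, h, add_sub_cancel_left]
  split_ifs <;> simp

lemma ad_even_nilpotent (he : IsYRep M N e) {a b : Fin (M + N)} (hpa : pa M a = pa M b)
    (hab : a ≠ b) (c d : Fin (M + N)) {n : ℕ} (hn : 1 ≤ n) :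
    ((fun Z => e b a 1 * Z - Z * e b a 1)^[3] (e c d n)) = 0 := by
  have h1 : e b a 1 * e b a n - e b a n * e b a 1 = 0 := by
    rw [ad_even he hpa b a hn, if_neg hab, sub_zero]
  have h2 : ∀ d, e b a 1 * e b d n - e b d n * e b a 1 = -(if d = b then e b a n else 0) := by
    intro d
    rw [ad_even he hpa b d hn, if_neg hab, zero_sub]
  have h3 : ∀ c, e b a 1 * e c a n - e c a n * e b a 1 = if a = c then e b a n else 0 := by
    intro c
    rw [ad_even he hpa c a hn, if_neg hab, sub_zero]
  have h4 : ∀ X Z : Module.End ℂ V, e b a 1 * (X - Z) - (X - Z) * e b a 1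
      = (e b a 1 * X - X * e b a 1) - (e b a 1 * Z - Z * e b a 1) := by
    intro X Z; noncomm_ring
  have h5 : ∀ X : Module.End ℂ V, e b a 1 * (-X) - (-X) * e b a 1
      = -(e b a 1 * X - X * e b a 1) := by
    intro X; noncomm_ring
  simp only [Function.iterate_succ, Function.iterate_zero, Function.comp_apply, id_eq,
    ad_even he hpa c d hn]
  split_ifs with hac hdb hdb
  · simp only [h2, h3, h4, h5, if_pos hac, if_pos hdb, if_neg hab]; simp
  · simp only [h2, if_neg hdb, sub_zero]; simp
  · simp only [h3, h4, if_neg hac]; simp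
  · simp

/-- For an even simple root with `k = μ a - μ (a+1)`, the vector `f ^ (k + 1) v` is singular by the
`sl₂` computation `e f ^ (j + 1) v = (j + 1) (k - j) f ^ j v`, hence zero. -/
lemma simple_lowering_locNil (he : IsYRep M N e) (hirr : IsIrr e) {v : V} (hv0 : v ≠ 0)
    {μ : Fin (M + N) → ℂ}
    (hup : ∀ a b, a < b → ∀ n, 1 ≤ n → e a b n v = 0)
    (hdiag : ∀ a, e a a 1 v = μ a • v) (hz : ∀ a b n, 2 ≤ n → e a b n = 0)
    {a b : Fin (M + N)} (hab : (b : ℕ) = a + 1) (hpa : pa M a = pa M b) {k : ℕ}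
    (hk : μ a - μ b = k) : LocNil (e b a 1) := by
  have hne : a ≠ b := fun h => by rw [h] at hab; omega
  refine locNil_of_apply hirr hv0 (fun c d n hn => ⟨3, ad_even_nilpotent he hpa hne c d hn⟩)
    ⟨k + 1, ?_⟩
  have hcomm : ∀ (c d : Fin (M + N)) (w : V), e c d 1 (e b a 1 w) = e b a 1 (e c d 1 w)
      - (if a = c then e b d 1 w else 0) + (if d = b then e c a 1 w else 0) := by
    intro c d w
    have h := congrArg (fun f : Module.End ℂ V => f w) (ad_even he hpa c d le_rfl)
    simp only [LinearMap.sub_apply, Module.End.mul_apply, apply_ite (fun f : Module.End ℂ V => f w),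
      LinearMap.zero_apply] at h
    rw [sub_eq_iff_eq_add] at h
    rw [h]
    abel
  -- Bracketing with `f` keeps the raising operators other than `t^a_b` among themselves.
  have hother : ∀ (j : ℕ) (c d : Fin (M + N)), c < d → ¬(c = a ∧ d = b) →
      e c d 1 ((e b a 1 ^ j) v) = 0 := by
    intro j
    induction j with
    | zero => intro c d hcd _; exact hup c d hcd 1 le_rfl
    | succ j ih =>
      intro c d hcd hnot
      have hcd' := Fin.lt_def.mp hcd
      rw [pow_succ', Module.End.mul_apply, hcomm, ih c d hcd hnot, map_zero, zero_sub]
      have h1 : (if a = c then e b d 1 ((e b a 1 ^ j) v) else 0) = 0 := by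
        split_ifs with h
        · subst h
          have hdb : (d : ℕ) ≠ b := fun hd => hnot ⟨rfl, Fin.ext hd⟩
          exact ih b d (Fin.lt_def.mpr (by omega)) fun h => hne h.1.symm
        · rfl
      have h2 : (if d = b then e c a 1 ((e b a 1 ^ j) v) else 0) = 0 := by
        split_ifs with h
        · subst h
          have hca : (c : ℕ) ≠ a := fun hd => hnot ⟨Fin.ext hd, rfl⟩
          exact ih c a (Fin.lt_def.mpr (by omega)) fun h => hne h.2
        · rfl
      rw [h1, h2, neg_zero, add_zero]
  have hweight : ∀ j : ℕ, e a a 1 ((e b a 1 ^ j) v) = (μ a - j) • (e b a 1 ^ j) v ∧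
      e b b 1 ((e b a 1 ^ j) v) = (μ b + j) • (e b a 1 ^ j) v := by
    intro j
    induction j with
    | zero => simp [hdiag]
    | succ j ih =>
      rw [pow_succ', Module.End.mul_apply, hcomm, hcomm, ih.1, ih.2, if_pos rfl, if_neg hne,
        if_neg hne, if_pos rfl, map_smul, map_smul]
      push_cast
      constructor <;> module
  have hraise : ∀ j : ℕ, e a b 1 ((e b a 1 ^ (j + 1)) v) =
      (((j : ℂ) + 1) * (k - j)) • (e b a 1 ^ j) v := by
    intro j
    induction j with
    | zero =>
      rw [zero_add, pow_one, hcomm, if_pos rfl, if_pos rfl, hup a b (Fin.lt_def.mpr (by omega))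
        1 le_rfl, hdiag, hdiag, map_zero, ← hk]
      simp only [pow_zero, Module.End.one_apply, Nat.cast_zero]
      module
    | succ j ih =>
      rw [pow_succ', Module.End.mul_apply, hcomm, if_pos rfl, if_pos rfl, ih, map_smul,
        ← Module.End.mul_apply, ← pow_succ', (hweight (j + 1)).1, (hweight (j + 1)).2, ← hk]
      push_cast
      module
  have hH := Hop_maximal hdiag
  have hHj : ∀ j : ℕ, Hop e ((e b a 1 ^ j) v) =
      ((∑ a : Fin (M + N), -((a : ℕ) : ℂ) * μ a) - j) • (e b a 1 ^ j) v := by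
    intro j
    induction j with
    | zero => simpa using hH
    | succ j ih =>
      rw [pow_succ', Module.End.mul_apply, Hop_comm he _ _ le_rfl, ih, map_smul, hab]
      push_cast
      module
  refine singular_eq_zero he hirr hv0 hH (mem_lowerPart (k + 1) (by omega) (hHj (k + 1))) ?_
  intro c d hcd n hn
  rcases Nat.lt_or_ge 1 n with h | h
  · rw [hz c d n h, LinearMap.zero_apply]
  obtain rfl : n = 1 := by omega
  by_cases hcab : c = a ∧ d = b
  · obtain ⟨rfl, rfl⟩ := hcab
    rw [hraise, sub_self, mul_zero, zero_smul]
  · exact hother (k + 1) c d hcd hcab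

/-- Induction on the height, using `[t^b_c, t^c_a] = t^b_a` with `c = a + 1`, which has the parity of
`a` and `b`. -/
lemma even_lowering_locNil (he : IsYRep M N e)
    (hsimple : ∀ a b : Fin (M + N), (b : ℕ) = a + 1 → pa M a = pa M b → LocNil (e b a 1))
    (h : ℕ) : ∀ a b : Fin (M + N), (b : ℕ) = a + (h + 1) → pa M a = pa M b →
      LocNil (e b a 1) := by
  induction h with
  | zero => intro a b hab hpa; exact hsimple a b (by omega) hpa
  | succ h ih =>
    intro a b hab hpa
    let c : Fin (M + N) := ⟨a + 1, by omega⟩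
    have hc : (c : ℕ) = a + 1 := rfl
    have hac : pa M a = pa M c := by
      unfold pa at *
      split_ifs at * <;> omega
    have hcb : pa M c = pa M b := hac.symm.trans hpa
    have hne : a ≠ b := fun h => by rw [h] at hab; omega
    have hnac : a ≠ c := fun h => by rw [← h] at hc; omega
    have hncb : c ≠ b := fun h => by rw [h] at hc; omega
    refine locNil_commutator (x := e b c 1) (y := e c a 1) ?_ ?_ ?_
      (ih c b (by omega) hcb) (hsimple a c hc hac)
    · rw [← sub_eq_iff_eq_add', ad_even he hcb c a le_rfl, if_pos rfl, if_neg hne, sub_zero]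
    · rw [← sub_eq_zero, ad_even he hcb b a le_rfl, if_neg hncb, if_neg hne, sub_zero]
    · rw [← sub_eq_zero, ad_even he hac b a le_rfl, if_neg hne, if_neg hnac, sub_zero]

/-- The supercommutator of an odd root vector with itself is twice its square, and is zero. -/
lemma odd_lowering_locNil (he : IsYRep M N e) {a b : Fin (M + N)} (hpa : pa M a ≠ pa M b) :
    LocNil (e b a 1) := by
  have hne : a ≠ b := fun h => hpa (h ▸ rfl)
  have hs : sgn1 M b a b a = -1 := by
    unfold sgn1 pa at *
    split_ifs at * <;> simp_all
  intro w
  refine ⟨2, ?_⟩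
  have h := level_one he b a b a le_rfl w
  rw [hs, if_neg hne, smul_zero, sub_zero, add_zero, neg_one_smul] at h
  rw [pow_two, Module.End.mul_apply]
  have h2 : (2 : ℂ) • e b a 1 (e b a 1 w) = 0 := by
    rw [two_smul]
    exact eq_neg_iff_add_eq_zero.mp h
  exact (smul_eq_zero.mp h2).resolve_left two_ne_zero

/-! ### The span of ordered monomials -/

/-- `flag e v [g₁, …, gᵣ]` is the span of the vectors `t_{g₁}^{k₁} ⋯ t_{gᵣ}^{kᵣ} v`. -/
noncomputable def flag (e : Fin (M + N) → Fin (M + N) → ℕ → Module.End ℂ V) (v : V) :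
    List (Gen M N) → Submodule ℂ V
  | [] => Submodule.span ℂ {v}
  | g :: gs => ⨆ k : ℕ, (flag e v gs).map (e g.1 g.2.1 (g.2.2 + 1) ^ k)

lemma flag_finiteDimensional (v : V) (gs : List (Gen M N))
    (h : ∀ g ∈ gs, LocNil (e g.1 g.2.1 (g.2.2 + 1))) : FiniteDimensional ℂ (flag e v gs) := by
  induction gs with
  | nil => exact inferInstanceAs (FiniteDimensional ℂ (Submodule.span ℂ {v}))
  | cons g gs ih =>
    have := ih fun g hg => h g (List.mem_cons_of_mem _ hg)
    exact finiteDimensional_iSup_map_pow (h g List.mem_cons_self) _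

/-- A word whose letters are in `gs` or have `v` as an eigenvector can be rearranged so that the
letters in `gs` come first, in the order of `gs`; applied to `v` it then lands in the flag. -/
lemma exists_perm_mem_flag (v : V) (gs : List (Gen M N)) : ∀ l : List (Gen M N),
    (∀ g ∈ l, g ∈ gs ∨ ∃ c : ℂ, e g.1 g.2.1 (g.2.2 + 1) v = c • v) →
      ∃ l', l.Perm l' ∧ op e l' v ∈ flag e v gs := by
  induction gs with
  | nil =>
    intro l hl
    refine ⟨l, List.Perm.refl _, ?_⟩
    change op e l v ∈ Submodule.span ℂ {v}
    induction l with
    | nil => exact Submodule.mem_span_singleton_self v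
    | cons g l ih =>
      obtain ⟨c, hc⟩ := (hl g List.mem_cons_self).resolve_left (by simp)
      obtain ⟨c', hc'⟩ := Submodule.mem_span_singleton.mp
        (ih fun g hg => hl g (List.mem_cons_of_mem _ hg))
      refine Submodule.mem_span_singleton.mpr ⟨c' * c, ?_⟩
      rw [op_cons, Module.End.mul_apply, ← hc', map_smul, hc, smul_smul]
  | cons g gs ih =>
    intro l hl
    obtain ⟨l', hp, hl'⟩ := ih (l.filter fun x => !decide (x = g)) (by
      intro x hx
      rw [List.mem_filter] at hx
      have hxg : x ≠ g := by simpa using hx.2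
      simpa [hxg] using hl x hx.1)
    refine ⟨l.filter (fun x => decide (x = g)) ++ l',
      (List.filter_append_perm _ l).symm.trans (hp.append_left _), ?_⟩
    have hrep : l.filter (fun x => decide (x = g)) =
        List.replicate (l.filter (fun x => decide (x = g))).length g := by
      rw [List.eq_replicate_iff]
      exact ⟨rfl, fun x hx => by simpa using (List.mem_filter.mp hx).2⟩
    rw [hrep, op_append, Module.End.mul_apply]
    refine Submodule.mem_iSup_of_mem (l.filter (fun x => decide (x = g))).length ?_
    refine ⟨op e l' v, hl', ?_⟩
    simp [op]

end Operators
/-- **Finite dimensionality of evaluation-type highest weight modules**: if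
`μ_a − μ_{a+1} ∈ ℤ_{≥0}` for all `1 ≤ a < M+N` with `a ≠ M` (1-based; 0-based below), then
the irreducible highest weight module with highest weight `λ_a(x) = (−1)^{[a]} + μ_a x^{−1}`
is finite dimensional. -/
theorem evaluation_highest_weight_finite_dimensional (M N : ℕ) (hM : 1 ≤ M) (hN : 1 ≤ N)
    (μ : Fin (M + N) → ℂ)
    (hdom : ∀ (a : ℕ) (ha : a + 1 < M + N), a + 1 ≠ M →
      ∃ k : ℕ, μ ⟨a, by omega⟩ - μ ⟨a + 1, ha⟩ = (k : ℂ))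
    (V : Type) [AddCommGroup V] [Module ℂ V]
    (ρ : Y M N →ₐ[ℂ] Module.End ℂ V) (v : V)
    (hirr : IsIrreducibleRep M N ρ)
    (hmax : IsMaximalVec M N ρ v fun a n => if n = 1 then μ a else 0) :
    FiniteDimensional ℂ V := by
  have he := isYRep_of_rep ρ
  have hI := isIrr_of_rep ρ hirr
  set e : Fin (M + N) → Fin (M + N) → ℕ → Module.End ℂ V := fun a b n => ρ (t M N a b n)
  obtain ⟨hv0, hup, hd⟩ := hmax
  have hup' : ∀ a b, a < b → ∀ n, 1 ≤ n → e a b n v = 0 := hup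
  have hdiag : ∀ a, e a a 1 v = μ a • v := fun a => by simpa using hd a 1 le_rfl
  have hdiag2 : ∀ a n, 2 ≤ n → e a a n v = 0 := fun a n hn => by
    simpa [show n ≠ 1 by omega] using hd a n (by omega)
  have hz : ∀ a b n, 2 ≤ n → e a b n = 0 := fun a b n hn =>
    higher_eq_zero he hI hv0 (fun a b n hn =>
      higher_apply_eq_zero he hI hv0 hup' hdiag hdiag2 (M + N) b a (by omega) n hn) a b hn
  have hsimple : ∀ a b : Fin (M + N), (b : ℕ) = a + 1 → pa M a = pa M b →
      LocNil (e b a 1) := by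
    intro a b hab hpa
    have haM : (a : ℕ) + 1 ≠ M := by
      intro h
      unfold pa at hpa
      split_ifs at hpa <;> omega
    obtain ⟨k, hk⟩ := hdom a (by omega) haM
    have hb : (⟨a + 1, by omega⟩ : Fin (M + N)) = b := Fin.ext hab.symm
    rw [hb] at hk
    exact simple_lowering_locNil he hI hv0 hup' hdiag hz hab hpa hk
  have hlower : ∀ a b : Fin (M + N), a < b → LocNil (e b a 1) := by
    intro a b hab
    by_cases hpa : pa M a = pa M b
    · obtain ⟨h, hh⟩ := Nat.exists_eq_add_of_lt (Fin.lt_def.mp hab)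
      exact even_lowering_locNil he hsimple h a b hh hpa
    · exact odd_lowering_locNil he hpa
  let gs : List (Gen M N) :=
    ((Finset.univ : Finset (Fin (M + N) × Fin (M + N))).filter fun p => p.2 < p.1).toList.map
      fun p => (p.1, p.2, 0)
  have hgs : ∀ g ∈ gs, LocNil (e g.1 g.2.1 (g.2.2 + 1)) := by
    intro g hg
    obtain ⟨p, hp, rfl⟩ := List.mem_map.mp hg
    exact hlower _ _ (by simpa using hp)
  have hfin := flag_finiteDimensional v gs hgs
  have htop : flag e v gs = ⊤ := by
    refine (eq_zero_or_eq_top_of_op_mem hI v _ (op_mem_of_perm he v _ fun l =>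
      exists_perm_mem_flag v gs l fun g _ => ?_)).resolve_left hv0
    obtain ⟨a, b, k⟩ := g
    rcases Nat.eq_zero_or_pos k with rfl | hk
    · rcases lt_trichotomy a b with h | rfl | h
      · exact Or.inr ⟨0, by rw [zero_smul]; exact hup a b h _ (by omega)⟩
      · exact Or.inr ⟨μ a, hdiag a⟩
      · exact Or.inl (List.mem_map.mpr ⟨(a, b), by simpa using h, rfl⟩)
    · exact Or.inr ⟨0, by rw [hz a b _ (by change 2 ≤ k + 1; omega)]; simp⟩
  rw [htop] at hfin
  exact Module.Finite.of_surjective (Submodule.subtype ⊤) fun w => ⟨⟨w, trivial⟩, rfl⟩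

end SY
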